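/- Let S be a Cu-semigroup satisfying (O5) and weak cancellation, let y ∈ S be full and (3,ω)-divisible, and let c_1, c_2 ∈ S satisfy c_1 ≪ ∞·y and c_2 ≪ ∞·y (note that ∞·y is the largest element of S since y is full). Then there exist z, w ∈ S such that w is full, 2z + w ≤ y, c_1 ∝ z, c_2 ∝ z, and z ≪ ∞·y. -/

import Mathlib

/-- The way-below (compact containment) relation on a partially ordered set:
`WayBelow x y` holds if whenever `(y n)` is an increasing sequence admitting a
supremum `s` with `y ≤ s`, then `x ≤ y n` for some `n`. -/
def WayBelow {S : Type*} [PartialOrder S] (x y : S) : Prop :=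
  ∀ f : ℕ → S, Monotone f → ∀ s : S, IsLUB (Set.range f) s → y ≤ s → ∃ n, x ≤ f n

/-- An abstract Cuntz semigroup (Cu-semigroup): a positively ordered commutative
monoid satisfying the axioms (O1)-(O4). -/
class CuSemigroup (S : Type*) [AddCommMonoid S] [PartialOrder S] : Prop where
  /-- The order is positive. -/
  zero_le : ∀ x : S, 0 ≤ x
  /-- Addition is order-preserving. -/
  add_le_add : ∀ {x y z w : S}, x ≤ y → z ≤ w → x + z ≤ y + w
  /-- (O1): every increasing sequence has a supremum. -/
  O1 : ∀ f : ℕ → S, Monotone f → ∃ s : S, IsLUB (Set.range f) s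
  /-- (O2): every element is the supremum of a `≪`-increasing sequence. -/
  O2 : ∀ x : S, ∃ f : ℕ → S, (∀ n, WayBelow (f n) (f (n + 1))) ∧ IsLUB (Set.range f) x
  /-- (O3): the way-below relation is additive. -/
  O3 : ∀ {x' x y' y : S}, WayBelow x' x → WayBelow y' y → WayBelow (x' + y') (x + y)
  /-- (O4): addition is compatible with suprema of increasing sequences. -/
  O4 : ∀ (f g : ℕ → S), Monotone f → Monotone g → ∀ a b : S,
        IsLUB (Set.range f) a → IsLUB (Set.range g) b →
        IsLUB (Set.range fun n => f n + g n) (a + b)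

/-- Axiom (O5) (almost algebraic order). -/
def O5 (S : Type*) [AddCommMonoid S] [PartialOrder S] : Prop :=
  ∀ x' x z : S, WayBelow x' x → x ≤ z → ∃ w : S, x' + w ≤ z ∧ z ≤ x + w

/-- Axiom (O6+). -/
def O6plus (S : Type*) [AddCommMonoid S] [PartialOrder S] : Prop :=
  ∀ a b c x' x y' y : S, a ≤ b + c →
    WayBelow x' x → x ≤ a → x ≤ b → WayBelow y' y → y ≤ a → y ≤ c →
    ∃ e f : S, a ≤ e + f ∧ WayBelow x' e ∧ e ≤ a ∧ e ≤ b ∧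
      WayBelow y' f ∧ f ≤ a ∧ f ≤ c

/-- Weak cancellation: `x + z ≪ y + z` implies `x ≪ y`. -/
def WeakCancel (S : Type*) [AddCommMonoid S] [PartialOrder S] : Prop :=
  ∀ x y z : S, WayBelow (x + z) (y + z) → WayBelow x y

/-- A Cu-semigroup is countably based if there is a countable subset `B` such that every
element is the supremum of a `≪`-increasing sequence with elements in `B`. -/
def CountablyBased (S : Type*) [AddCommMonoid S] [PartialOrder S] : Prop :=
  ∃ B : Set S, B.Countable ∧ ∀ x : S, ∃ f : ℕ → S, (∀ n, f n ∈ B) ∧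
    (∀ n, WayBelow (f n) (f (n + 1))) ∧ IsLUB (Set.range f) x

/-- Addition distributes over the infimum operation. -/
def InfDistrib (S : Type*) [AddCommMonoid S] [SemilatticeInf S] : Prop :=
  ∀ x y z : S, (x + z) ⊓ (y + z) = (x ⊓ y) + z

/-- A functional on an ordered monoid: a `[0,∞]`-valued map preserving `0`, addition,
order, and suprema of increasing sequences. -/
def IsFunctional {S : Type*} [AddCommMonoid S] [PartialOrder S] (l : S → ENNReal) : Prop :=
  l 0 = 0 ∧ (∀ x y : S, l (x + y) = l x + l y) ∧ (∀ x y : S, x ≤ y → l x ≤ l y) ∧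
    ∀ (f : ℕ → S) (s : S), Monotone f → IsLUB (Set.range f) s → l s = ⨆ n, l (f n)

/-- An element is soft if each of its way-below approximants `x'` satisfies
`(k+1)·x' ≤ k·x` for some `k`. -/
def Soft {S : Type*} [AddCommMonoid S] [PartialOrder S] (x : S) : Prop :=
  ∀ x' : S, WayBelow x' x → ∃ k : ℕ, (k + 1) • x' ≤ k • x

/-- An element `x` is full if `∞·x = sup_n n·x` exists and dominates every element. -/
def IsFull {S : Type*} [AddCommMonoid S] [PartialOrder S] (x : S) : Prop :=
  ∃ s : S, IsLUB (Set.range fun n : ℕ => n • x) s ∧ ∀ t : S, t ≤ s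

section helpers
variable {S : Type*} [AddCommMonoid S] [PartialOrder S]

theorem WayBelow.le' {x y : S} (h : WayBelow x y) : x ≤ y := by
  obtain ⟨_, hn⟩ := h (fun _ => y) monotone_const y (by simp) le_rfl
  exact hn

theorem WayBelow.trans_le' {x y z : S} (h : WayBelow x y) (h2 : y ≤ z) : WayBelow x z :=
  fun f hf s hs hz => h f hf s hs (h2.trans hz)

theorem WayBelow.le_trans' {x y z : S} (h : x ≤ y) (h2 : WayBelow y z) : WayBelow x z :=
  fun f hf s hs hz => (h2 f hf s hs hz).imp fun _ hn => h.trans hn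

theorem cu_nsmul_le [CuSemigroup S] {x y : S} (h : x ≤ y) (n : ℕ) : n • x ≤ n • y := by
  induction n with
  | zero => simp
  | succ k ih => rw [succ_nsmul, succ_nsmul]; exact CuSemigroup.add_le_add ih h

theorem cu_nsmul_mono [CuSemigroup S] (x : S) : Monotone fun n : ℕ => n • x := by
  refine monotone_nat_of_le_succ fun n => ?_
  have := CuSemigroup.add_le_add (le_refl (n • x)) (CuSemigroup.zero_le x)
  simpa [succ_nsmul] using this

theorem cu_nsmul_lub [CuSemigroup S] {f : ℕ → S} (hf : Monotone f) {x : S}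
    (hx : IsLUB (Set.range f) x) (n : ℕ) : IsLUB (Set.range fun k => n • f k) (n • x) := by
  induction n with
  | zero => simp
  | succ m ih =>
    simp only [succ_nsmul]
    exact CuSemigroup.O4 _ _ (fun a b h => cu_nsmul_le (hf h) m) hf _ _ ih hx

end helpers

/-- In a Cu-semigroup with (O5) and weak cancellation, if `y` is full and
`(3,ω)`-divisible and `c₁, c₂ ≪ ∞·y`, then there are `z, w` with `w` full,
`2z + w ≤ y`, `c₁ ∝ z`, `c₂ ∝ z` and `z ≪ ∞·y`. -/
theorem exists_small_full_complement {S : Type*} [AddCommMonoid S] [PartialOrder S]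
    [CuSemigroup S] (h5 : O5 S) (hwc : WeakCancel S)
    (y : S) (iy : S) (hiy : IsLUB (Set.range fun n : ℕ => n • y) iy)
    (hfull : ∀ t : S, t ≤ iy)
    (hdiv : ∀ y' : S, WayBelow y' y → ∃ (z : S) (n : ℕ), 3 • z ≤ y ∧ y' ≤ n • z)
    (c₁ c₂ : S) (hc₁ : WayBelow c₁ iy) (hc₂ : WayBelow c₂ iy) :
    ∃ z w : S, IsFull w ∧ 2 • z + w ≤ y ∧
      (∃ n : ℕ, c₁ ≤ n • z) ∧ (∃ n : ℕ, c₂ ≤ n • z) ∧ WayBelow z iy := by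
  obtain ⟨f, hf, hfy⟩ := CuSemigroup.O2 y
  have fm : Monotone f := monotone_nat_of_le_succ fun n => (hf n).le'
  have gm : Monotone fun n => n • f n := fun a b h =>
    (cu_nsmul_mono (f a) h).trans (cu_nsmul_le (fm h) b)
  have glub : IsLUB (Set.range fun n => n • f n) iy := by
    refine ⟨fun _ _ => hfull _, fun b hb => hiy.2 ?_⟩
    rintro _ ⟨n, rfl⟩
    refine (cu_nsmul_lub fm hfy n).2 ?_
    rintro _ ⟨k, rfl⟩
    exact ((cu_nsmul_le (fm (le_max_right n k)) n).trans
      (cu_nsmul_mono _ (le_max_left n k))).trans (hb ⟨max n k, rfl⟩)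
  obtain ⟨n₁, h₁⟩ := hc₁ _ gm iy glub le_rfl
  obtain ⟨n₂, h₂⟩ := hc₂ _ gm iy glub le_rfl
  have h₁ := h₁.trans (gm (le_max_left n₁ n₂))
  have h₂ := h₂.trans (gm (le_max_right n₁ n₂))
  generalize max n₁ n₂ = N at h₁ h₂
  obtain ⟨e, n, he, hn⟩ := hdiv (f (N + 1)) ((hf (N + 1)).trans_le' (hfy.1 ⟨_, rfl⟩))
  obtain ⟨g, hg, hge⟩ := CuSemigroup.O2 e
  have gmono : Monotone g := monotone_nat_of_le_succ fun n => (hg n).le'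
  obtain ⟨k, hk⟩ := (hf N) _ (fun a b h => cu_nsmul_le (gmono h) n) _
    (cu_nsmul_lub gmono hge n) hn
  have hwe : WayBelow (g (k + 1)) e := (hg (k + 1)).trans_le' (hge.1 ⟨_, rfl⟩)
  have h2e : 2 • g (k + 1) ≤ y :=
    (cu_nsmul_le hwe.le' 2).trans ((cu_nsmul_mono e (by norm_num : 2 ≤ 3)).trans he)
  obtain ⟨w, hw₁, hw₂⟩ := h5 (2 • g k) (2 • g (k + 1)) y
    (by rw [two_nsmul, two_nsmul]; exact CuSemigroup.O3 (hg k) (hg k)) h2e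
  have h3 : WayBelow (3 • g (k + 1)) (3 • e) := by
    have := CuSemigroup.O3 hwe (CuSemigroup.O3 hwe hwe)
    simpa [succ_nsmul, add_assoc] using this
  have hgw : WayBelow (g (k + 1)) w := by
    apply hwc _ _ (2 • g (k + 1))
    have := (h3.trans_le' he).trans_le' hw₂
    rwa [succ_nsmul' _ 2, add_comm _ w] at this
  have hyw : y ≤ 3 • w := by
    rw [succ_nsmul]
    exact hw₂.trans (CuSemigroup.add_le_add (cu_nsmul_le hgw.le' 2) le_rfl)
  have hc : ∀ c, c ≤ N • f N → ∃ n : ℕ, c ≤ n • g k := fun c h =>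
    ⟨n * N, by rw [mul_nsmul']; exact h.trans (by
      rw [← mul_nsmul', mul_comm, mul_nsmul']; exact cu_nsmul_le hk N)⟩
  refine ⟨g k, w, ?_, hw₁, hc _ h₁, hc _ h₂, (hg k).trans_le' (hfull _)⟩
  obtain ⟨s, hs⟩ := CuSemigroup.O1 _ (cu_nsmul_mono w)
  refine ⟨s, hs, fun t => (hfull t).trans (hiy.2 ?_)⟩
  rintro _ ⟨m, rfl⟩
  refine (cu_nsmul_le hyw m).trans ?_
  rw [← mul_nsmul']
  exact hs.1 ⟨m * 3, rfl⟩
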